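/- Fix an integer n ≥ 2 and reals b₁ > b₂ ≥ … ≥ bₙ > 0. Let r, r' ∈ ℝⁿ be such that rᵢ = r'ᵢ > 0 for all i ∈ {2, …, n} and 0 < r₁ < r'₁. Then τ₁(r) < τ₁(r'); that is, the first zero τ₁ is strictly increasing as a function of the first coordinate r₁ on (0, ∞). -/

import Mathlib

open Real Finset Set

/-- `ψ(τ, r) = Σ_{i=1}^{n} (rᵢ²/2)·(3τ − bᵢτ²·cos(bᵢτ/2)/sin(bᵢτ/2) − sin(bᵢτ)/bᵢ)`. -/
noncomputable def psiSum (n : ℕ) (b r : ℕ → ℝ) (τ : ℝ) : ℝ :=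
  ∑ i ∈ Finset.Icc 1 n, (r i) ^ 2 / 2 *
    (3 * τ - b i * τ ^ 2 * Real.cos (b i * τ / 2) / Real.sin (b i * τ / 2) -
      Real.sin (b i * τ) / b i)

open Filter Topology

/-- The contribution of one invariant `b` to `psiSum`, up to the factor `r² / 2`. -/
noncomputable def psiTerm (b τ : ℝ) : ℝ :=
  3 * τ - b * τ ^ 2 * Real.cos (b * τ / 2) / Real.sin (b * τ / 2) - Real.sin (b * τ) / b

theorem psiSum_eq_add (n : ℕ) (hn : 2 ≤ n) (b r : ℕ → ℝ) (τ : ℝ) :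
    psiSum n b r τ = r 1 ^ 2 / 2 * psiTerm (b 1) τ +
      ∑ i ∈ Finset.Icc 2 n, r i ^ 2 / 2 * psiTerm (b i) τ := by
  have h : Finset.Icc 1 n = insert 1 (Finset.Icc 2 n) := by
    ext i
    simp only [Finset.mem_Icc, Finset.mem_insert]
    omega
  unfold psiSum psiTerm
  rw [h, Finset.sum_insert (by simp)]

theorem sin_sq_mul_cos_lt {x : ℝ} (h0 : 0 < x) (hπ : x < π) :
    2 * x ^ 2 * Real.cos x + Real.sin x ^ 2 * Real.cos x < 3 * x * Real.sin x := by
  have hs : 0 < Real.sin x := Real.sin_pos_of_pos_of_lt_pi h0 hπ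
  have hxs : 0 < x * Real.sin x := mul_pos h0 hs
  rcases le_or_gt (π / 2) x with h | h
  · have hc : Real.cos x ≤ 0 :=
      Real.cos_nonpos_of_pi_div_two_le_of_le h (by linarith)
    nlinarith [mul_nonneg (sq_nonneg x) (neg_nonneg.2 hc),
      mul_nonneg (sq_nonneg (Real.sin x)) (neg_nonneg.2 hc)]
  · have hc : 0 < Real.cos x := Real.cos_pos_of_mem_Ioo ⟨by linarith, h⟩
    have ht : x * Real.cos x < Real.sin x := by
      have := Real.lt_tan h0 h
      rwa [Real.tan_eq_sin_div_cos, lt_div_iff₀ hc] at this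
    have hsx : Real.sin x ^ 2 < x ^ 2 := by
      have := Real.sin_lt h0
      gcongr
    nlinarith [mul_pos hc (sub_pos.2 hsx), mul_pos h0 (sub_pos.2 ht)]

theorem psiTerm_pos {b τ : ℝ} (hb : 0 < b) (hτ : 0 < τ) (h : b * τ / 2 < π) :
    0 < psiTerm b τ := by
  have h0 : 0 < b * τ / 2 := by positivity
  have hs : 0 < Real.sin (b * τ / 2) := Real.sin_pos_of_pos_of_lt_pi h0 h
  have key := sin_sq_mul_cos_lt h0 h
  have h2 : Real.sin (b * τ) = 2 * Real.sin (b * τ / 2) * Real.cos (b * τ / 2) := by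
    rw [← Real.sin_two_mul]
    congr 1
    ring
  have : psiTerm b τ = 2 / (b * Real.sin (b * τ / 2)) *
      (3 * (b * τ / 2) * Real.sin (b * τ / 2) - (2 * (b * τ / 2) ^ 2 * Real.cos (b * τ / 2) +
        Real.sin (b * τ / 2) ^ 2 * Real.cos (b * τ / 2))) := by
    unfold psiTerm
    rw [h2]
    generalize Real.sin (b * τ / 2) = s at hs
    generalize Real.cos (b * τ / 2) = c
    field_simp
    ring
  rw [this]
  exact mul_pos (by positivity) (sub_pos.2 key)

theorem psiTerm_three_pi_div_pos {b : ℝ} (hb : 0 < b) : 0 < psiTerm b (3 * π / b) := by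
  have h1 : b * (3 * π / b) / 2 = π / 2 + π := by
    field_simp
    ring
  have h2 : b * (3 * π / b) = π + 2 * π := by
    field_simp
    ring
  unfold psiTerm
  rw [h1, h2, Real.cos_add_pi, Real.cos_pi_div_two, Real.sin_add_two_pi, Real.sin_pi]
  have := Real.pi_pos
  simp only [neg_zero, mul_zero, zero_div, sub_zero]
  positivity

theorem continuousAt_psiTerm {b τ : ℝ} (h : Real.sin (b * τ / 2) ≠ 0) :
    ContinuousAt (psiTerm b) τ := by
  unfold psiTerm
  fun_prop (disch := exact h)

theorem sin_half_mul_ne_zero {b τ : ℝ} (hb : 0 < b) (hτ : 0 < τ) (h : τ < 2 * π / b) :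
    Real.sin (b * τ / 2) ≠ 0 := by
  rw [lt_div_iff₀ hb] at h
  exact (Real.sin_pos_of_pos_of_lt_pi (by positivity) (by linarith)).ne'

theorem sin_half_mul_neg {b τ : ℝ} (hb : 0 < b) (h₁ : 2 * π / b < τ) (h₂ : τ < 4 * π / b) :
    Real.sin (b * τ / 2) < 0 := by
  rw [div_lt_iff₀ hb] at h₁
  rw [lt_div_iff₀ hb] at h₂
  have := Real.sin_pos_of_pos_of_lt_pi (x := b * τ / 2 - π) (by linarith) (by linarith)
  rw [Real.sin_sub_pi] at this
  linarith

theorem tendsto_sin_half_mul {b : ℝ} (hb : 0 < b) :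
    Tendsto (fun τ => Real.sin (b * τ / 2)) (𝓝 (2 * π / b)) (𝓝 0) := by
  have h : ContinuousAt (fun τ => Real.sin (b * τ / 2)) (2 * π / b) := by fun_prop
  have h1 : b * (2 * π / b) / 2 = π := by field_simp
  simpa [ContinuousAt, h1] using h

theorem tendsto_neg_mul_cos_half {b : ℝ} (hb : 0 < b) :
    Tendsto (fun τ => -(b * τ ^ 2 * Real.cos (b * τ / 2))) (𝓝 (2 * π / b))
      (𝓝 (b * (2 * π / b) ^ 2)) := by
  have h : ContinuousAt (fun τ => -(b * τ ^ 2 * Real.cos (b * τ / 2))) (2 * π / b) := by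
    fun_prop
  have h1 : b * (2 * π / b) / 2 = π := by field_simp
  simpa [ContinuousAt, h1] using h

theorem psiTerm_eq_add (b : ℝ) : psiTerm b = fun τ =>
    -(b * τ ^ 2 * Real.cos (b * τ / 2)) * (Real.sin (b * τ / 2))⁻¹ +
      (3 * τ - Real.sin (b * τ) / b) := by
  funext τ
  unfold psiTerm
  rw [div_eq_mul_inv]
  ring

theorem tendsto_psiTerm_right {b : ℝ} (hb : 0 < b) :
    Tendsto (psiTerm b) (𝓝[>] (2 * π / b)) atBot := by
  have hsin : Tendsto (fun τ => Real.sin (b * τ / 2)) (𝓝[>] (2 * π / b)) (𝓝[<] 0) := by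
    refine tendsto_nhdsWithin_iff.2 ⟨(tendsto_sin_half_mul hb).mono_left nhdsWithin_le_nhds, ?_⟩
    have hlt : 2 * π / b < 4 * π / b := by
      have := Real.pi_pos
      gcongr
      norm_num
    filter_upwards [Ioo_mem_nhdsGT hlt] with τ hτ
    exact sin_half_mul_neg hb hτ.1 hτ.2
  have hrest : ContinuousAt (fun τ => 3 * τ - Real.sin (b * τ) / b) (2 * π / b) := by fun_prop
  rw [psiTerm_eq_add]
  exact (((tendsto_neg_mul_cos_half hb).mono_left nhdsWithin_le_nhds).pos_mul_atBot
    (by positivity) hsin.inv_tendsto_nhdsLT_zero).atBot_add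
    (hrest.tendsto.mono_left nhdsWithin_le_nhds)

theorem tendsto_psiTerm_left {b : ℝ} (hb : 0 < b) :
    Tendsto (psiTerm b) (𝓝[<] (2 * π / b)) atTop := by
  have hsin : Tendsto (fun τ => Real.sin (b * τ / 2)) (𝓝[<] (2 * π / b)) (𝓝[>] 0) := by
    refine tendsto_nhdsWithin_iff.2 ⟨(tendsto_sin_half_mul hb).mono_left nhdsWithin_le_nhds, ?_⟩
    filter_upwards [Ioo_mem_nhdsLT (show (0 : ℝ) < 2 * π / b by positivity)] with τ hτ
    have h := hτ.2
    rw [lt_div_iff₀ hb] at h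
    have h' : 0 < b * τ := mul_pos hb hτ.1
    exact Real.sin_pos_of_pos_of_lt_pi (by linarith) (by linarith)
  have hrest : ContinuousAt (fun τ => 3 * τ - Real.sin (b * τ) / b) (2 * π / b) := by fun_prop
  rw [psiTerm_eq_add]
  exact (((tendsto_neg_mul_cos_half hb).mono_left nhdsWithin_le_nhds).pos_mul_atTop
    (by positivity) hsin.inv_tendsto_nhdsGT_zero).atTop_add
    (hrest.tendsto.mono_left nhdsWithin_le_nhds)

theorem continuousAt_psiSum {n : ℕ} {b r : ℕ → ℝ} {τ : ℝ}
    (h : ∀ i ∈ Finset.Icc 1 n, Real.sin (b i * τ / 2) ≠ 0) : ContinuousAt (psiSum n b r) τ := by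
  unfold psiSum
  exact tendsto_finsetSum _ fun i hi => (continuousAt_psiTerm (h i hi)).const_mul _

section FirstInterval

variable {n : ℕ} {b : ℕ → ℝ}

theorem sin_half_mul_ne_zero_of_mem (hn : 2 ≤ n) (hpos : ∀ i ∈ Finset.Icc 1 n, 0 < b i)
    (hle : ∀ i ∈ Finset.Icc 2 n, b i ≤ b 2) {τ : ℝ} (h₁ : 2 * π / b 1 < τ)
    (h₂ : τ < 4 * π / b 1) (h₃ : τ < 2 * π / b 2) :
    ∀ i ∈ Finset.Icc 1 n, Real.sin (b i * τ / 2) ≠ 0 := by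
  intro i hi
  have hb1 : 0 < b 1 := hpos 1 (by simp; omega)
  have hτ : 0 < τ := lt_trans (by positivity) h₁
  rcases eq_or_ne i 1 with rfl | hi1
  · exact (sin_half_mul_neg hb1 h₁ h₂).ne
  · have hi2 : i ∈ Finset.Icc 2 n := by
      simp only [Finset.mem_Icc] at hi ⊢
      omega
    refine sin_half_mul_ne_zero (hpos i hi) hτ (h₃.trans_le ?_)
    exact div_le_div_of_nonneg_left (by positivity) (hpos i hi) (hle i hi2)

theorem sum_psiTerm_pos (hn : 2 ≤ n) (hpos : ∀ i ∈ Finset.Icc 2 n, 0 < b i)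
    (hle : ∀ i ∈ Finset.Icc 2 n, b i ≤ b 2) {r : ℕ → ℝ} (hr : ∀ i ∈ Finset.Icc 2 n, 0 < r i)
    {τ : ℝ} (hτ : 0 < τ) (h : τ < 2 * π / b 2) :
    r 2 ^ 2 / 2 * psiTerm (b 2) τ ≤ ∑ i ∈ Finset.Icc 2 n, r i ^ 2 / 2 * psiTerm (b i) τ ∧
      0 < r 2 ^ 2 / 2 * psiTerm (b 2) τ := by
  have h2 : 2 ∈ Finset.Icc 2 n := by simp; omega
  have hterm : ∀ i ∈ Finset.Icc 2 n, 0 < r i ^ 2 / 2 * psiTerm (b i) τ := by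
    intro i hi
    have hri := hr i hi
    refine mul_pos (by positivity) (psiTerm_pos (hpos i hi) hτ ?_)
    rw [lt_div_iff₀ (hpos 2 h2)] at h
    nlinarith [mul_le_mul_of_nonneg_left (hle i hi) hτ.le]
  exact ⟨Finset.single_le_sum (f := fun i => r i ^ 2 / 2 * psiTerm (b i) τ)
    (fun i hi => (hterm i hi).le) h2, hterm 2 h2⟩

theorem exists_psiSum_eq_zero (hn : 2 ≤ n) (hpos : ∀ i ∈ Finset.Icc 1 n, 0 < b i)
    (h12 : b 2 < b 1) (hle : ∀ i ∈ Finset.Icc 2 n, b i ≤ b 2) {r : ℕ → ℝ} (hr1 : 0 < r 1)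
    {u : ℝ} (h₁ : 2 * π / b 1 < u) (h₂ : u < 4 * π / b 1) (h₃ : u < 2 * π / b 2)
    (hu : 0 < psiSum n b r u) :
    ∃ τ, τ < u ∧ 0 < τ ∧ (∀ i ∈ Finset.Icc 1 n, Real.sin (b i * τ / 2) ≠ 0) ∧
      psiSum n b r τ = 0 := by
  have hb1 : 0 < b 1 := hpos 1 (by simp; omega)
  have hb2 : 0 < b 2 := hpos 2 (by simp; omega)
  have hp : 0 < 2 * π / b 1 := by positivity
  have hrest : Tendsto (fun τ => ∑ i ∈ Finset.Icc 2 n, r i ^ 2 / 2 * psiTerm (b i) τ)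
      (𝓝 (2 * π / b 1)) (𝓝 (∑ i ∈ Finset.Icc 2 n, r i ^ 2 / 2 * psiTerm (b i) (2 * π / b 1))) := by
    refine tendsto_finsetSum _ fun i hi => (continuousAt_psiTerm ?_).const_mul _
    have hbi : 0 < b i := hpos i (Finset.Icc_subset_Icc_left (by norm_num) hi)
    refine sin_half_mul_ne_zero hbi hp ?_
    exact div_lt_div_of_pos_left (by positivity) hbi ((hle i hi).trans_lt h12)
  have hbot : Tendsto (psiSum n b r) (𝓝[>] (2 * π / b 1)) atBot := by
    rw [funext (psiSum_eq_add n hn b r)]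
    exact ((tendsto_psiTerm_right hb1).const_mul_atBot (by positivity)).atBot_add
      (hrest.mono_left nhdsWithin_le_nhds)
  obtain ⟨a, ha0, ha⟩ := ((hbot.eventually_lt_atBot 0).and (Ioo_mem_nhdsGT h₁)).exists
  have hsin : ∀ τ ∈ Set.Icc a u, ∀ i ∈ Finset.Icc 1 n, Real.sin (b i * τ / 2) ≠ 0 :=
    fun τ hτ => sin_half_mul_ne_zero_of_mem hn hpos hle (ha.1.trans_le hτ.1)
      (hτ.2.trans_lt h₂) (hτ.2.trans_lt h₃)
  obtain ⟨τ, hτ, hτ0⟩ := intermediate_value_Ioo ha.2.le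
    (fun τ hτ => (continuousAt_psiSum (hsin τ hτ)).continuousWithinAt)
    (show (0 : ℝ) ∈ Set.Ioo (psiSum n b r a) (psiSum n b r u) from ⟨ha0, hu⟩)
  exact ⟨τ, hτ.2, hp.trans (ha.1.trans hτ.1), hsin τ ⟨hτ.1.le, hτ.2.le⟩, hτ0⟩

theorem exists_psiSum_pos (hn : 2 ≤ n) (hpos : ∀ i ∈ Finset.Icc 1 n, 0 < b i)
    (h12 : b 2 < b 1) (hle : ∀ i ∈ Finset.Icc 2 n, b i ≤ b 2) {r : ℕ → ℝ} (hr1 : 0 < r 1)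
    (hr : ∀ i ∈ Finset.Icc 2 n, 0 < r i) :
    ∃ u, 2 * π / b 1 < u ∧ u < 4 * π / b 1 ∧ u < 2 * π / b 2 ∧ 0 < psiSum n b r u := by
  have hb1 : 0 < b 1 := hpos 1 (by simp; omega)
  have hb2 : 0 < b 2 := hpos 2 (by simp; omega)
  have hr2 : 0 < r 2 := hr 2 (by simp; omega)
  have hpos' : ∀ i ∈ Finset.Icc 2 n, 0 < b i :=
    fun i hi => hpos i (Finset.Icc_subset_Icc_left (by norm_num) hi)
  have hπ := Real.pi_pos
  have hp : 0 < 2 * π / b 1 := by positivity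
  have h23 : 2 * π / b 1 < 3 * π / b 1 := by gcongr; norm_num
  have h34 : 3 * π / b 1 < 4 * π / b 1 := by gcongr; norm_num
  rcases lt_or_ge (3 * π / b 1) (2 * π / b 2) with h | h
  · refine ⟨_, h23, h34, h, ?_⟩
    obtain ⟨hs, ht⟩ := sum_psiTerm_pos hn hpos' hle hr (hp.trans h23) h
    have := mul_pos (show 0 < r 1 ^ 2 / 2 by positivity) (psiTerm_three_pi_div_pos hb1)
    rw [psiSum_eq_add n hn]
    linarith
  · have hlt : 2 * π / b 1 < 2 * π / b 2 :=
      div_lt_div_of_pos_left (by positivity) hb2 h12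
    have hc : ContinuousAt (fun τ => r 1 ^ 2 / 2 * psiTerm (b 1) τ) (2 * π / b 2) :=
      (continuousAt_psiTerm (sin_half_mul_neg hb1 hlt (h.trans_lt h34)).ne).const_mul _
    have htop : Tendsto (fun τ => r 1 ^ 2 / 2 * psiTerm (b 1) τ + r 2 ^ 2 / 2 * psiTerm (b 2) τ)
        (𝓝[<] (2 * π / b 2)) atTop :=
      (hc.tendsto.mono_left nhdsWithin_le_nhds).add_atTop
        ((tendsto_psiTerm_left hb2).const_mul_atTop (by positivity))
    obtain ⟨u, hu0, hu⟩ := ((htop.eventually_gt_atTop 0).and (Ioo_mem_nhdsLT hlt)).exists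
    refine ⟨u, hu.1, hu.2.trans (h.trans_lt h34), hu.2, ?_⟩
    obtain ⟨hs, -⟩ := sum_psiTerm_pos hn hpos' hle hr (hp.trans hu.1) hu.2
    rw [psiSum_eq_add n hn]
    linarith

end FirstInterval

/-- Fix `n ≥ 2` and reals `b₁ > b₂ ≥ … ≥ bₙ > 0`. Let `τ₁(r)`
denote the least `τ > 0` such that `sin(bᵢτ/2) ≠ 0` for all `i` and `ψ(τ, r) = 0`.
If `r, r' ∈ ℝⁿ` satisfy `rᵢ = r'ᵢ > 0` for `i ∈ {2,…,n}` and `0 < r₁ < r'₁`, then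
`τ₁(r) < τ₁(r')`: the first zero `τ₁` is strictly increasing in `r₁` on `(0, ∞)`. -/
theorem statement12 (n : ℕ) (hn : 2 ≤ n) (b : ℕ → ℝ)
    (hpos : ∀ i ∈ Finset.Icc 1 n, 0 < b i)
    (h12 : b 2 < b 1)
    (hanti : ∀ i j, 2 ≤ i → i ≤ j → j ≤ n → b j ≤ b i)
    (tau1 : (ℕ → ℝ) → ℝ)
    (htau1 : ∀ r : ℕ → ℝ, (∀ i ∈ Finset.Icc 1 n, 0 < r i) →
      IsLeast {τ : ℝ | 0 < τ ∧ (∀ i ∈ Finset.Icc 1 n, Real.sin (b i * τ / 2) ≠ 0) ∧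
        psiSum n b r τ = 0} (tau1 r))
    (r r' : ℕ → ℝ)
    (heq : ∀ i ∈ Finset.Icc 2 n, r i = r' i)
    (hposr : ∀ i ∈ Finset.Icc 2 n, 0 < r i)
    (h1 : 0 < r 1) (h1' : r 1 < r' 1) :
    tau1 r < tau1 r' := by
  have hle : ∀ i ∈ Finset.Icc 2 n, b i ≤ b 2 := fun i hi =>
    hanti 2 i le_rfl (Finset.mem_Icc.1 hi).1 (Finset.mem_Icc.1 hi).2
  have hb1 : 0 < b 1 := hpos 1 (by simp; omega)
  have hpos' : ∀ i ∈ Finset.Icc 2 n, 0 < b i :=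
    fun i hi => hpos i (Finset.Icc_subset_Icc_left (by norm_num) hi)
  have hposr' : ∀ i ∈ Finset.Icc 2 n, 0 < r' i := fun i hi => heq i hi ▸ hposr i hi
  have hall : ∀ s : ℕ → ℝ, 0 < s 1 → (∀ i ∈ Finset.Icc 2 n, 0 < s i) →
      ∀ i ∈ Finset.Icc 1 n, 0 < s i := by
    intro s hs1 hs i hi
    rcases eq_or_ne i 1 with rfl | hi1
    · exact hs1
    · refine hs i ?_
      simp only [Finset.mem_Icc] at hi ⊢
      omega
  have hmin := (htau1 r (hall r h1 hposr)).2
  obtain ⟨h0', hsin', hzero'⟩ := (htau1 r' (hall r' (h1.trans h1') hposr')).1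
  have hlt : ∀ u, 2 * π / b 1 < u → u < 4 * π / b 1 → u < 2 * π / b 2 →
      0 < psiSum n b r u → tau1 r < u := by
    intro u hu₁ hu₂ hu₃ hu
    obtain ⟨τ, hτu, hτ⟩ := exists_psiSum_eq_zero hn hpos h12 hle h1 hu₁ hu₂ hu₃ hu
    exact (hmin hτ).trans_lt hτu
  obtain ⟨u, hu₁, hu₂, hu₃, hu⟩ := exists_psiSum_pos hn hpos h12 hle h1 hposr
  rcases le_or_gt u (tau1 r') with h | h
  · exact (hlt u hu₁ hu₂ hu₃ hu).trans_le h
  obtain ⟨hs, ht⟩ := sum_psiTerm_pos hn hpos' hle hposr' h0' (h.trans hu₃)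
  rw [psiSum_eq_add n hn] at hzero'
  have hneg : psiTerm (b 1) (tau1 r') < 0 := by
    by_contra! hcon
    nlinarith [mul_nonneg (sq_nonneg (r' 1)) hcon]
  have hge : 2 * π / b 1 ≤ tau1 r' := by
    by_contra! hcon
    rw [lt_div_iff₀ hb1] at hcon
    exact hneg.not_gt (psiTerm_pos hb1 h0' (by linarith))
  have hne : 2 * π / b 1 ≠ tau1 r' := by
    intro hcon
    refine hsin' 1 (by simp; omega) ?_
    rw [← hcon, show b 1 * (2 * π / b 1) / 2 = π by field_simp, Real.sin_pi]
  refine hlt _ (lt_of_le_of_ne hge hne) (h.trans hu₂) (h.trans hu₃) ?_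
  have hsum : ∑ i ∈ Finset.Icc 2 n, r i ^ 2 / 2 * psiTerm (b i) (tau1 r') =
      ∑ i ∈ Finset.Icc 2 n, r' i ^ 2 / 2 * psiTerm (b i) (tau1 r') :=
    Finset.sum_congr rfl fun i hi => by rw [heq i hi]
  have hsq : r 1 ^ 2 < r' 1 ^ 2 := by gcongr
  rw [psiSum_eq_add n hn, hsum]
  nlinarith [mul_pos (sub_pos.2 hsq) (neg_pos.2 hneg)]
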